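/- Let r₀ < 1, let v : [r₀, 1) → ℝ be continuous and nondecreasing with v(r) → ∞ as r → 1⁻, and let δ > 0. Then there exist r₁ ∈ [r₀, 1) and a measurable set L ⊆ [r₀, 1) with ∫_L (1−x)^{−2} dx < ∞ such that for every r ∈ [r₁, 1) ∖ L (for which, in particular, v(r) > 1 and r + 2(1−r)²/log v(r) < 1), the inequality v(r + 2(1−r)²/log v(r)) < v(r)^{1+δ} holds. -/

import Mathlib

open Filter Set MeasureTheory

/-!
Write `u = log v` and `q = 1 + δ`. Near `1` one has `u ≥ 4`, so the points of `[r₁, 1)` are sorted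
into the levels `4 qⁿ ≤ u < 4 qⁿ⁺¹`. If `r < s` are bad points of the same level, then `s` precedes
`r + 2(1-r)²/u(r)`, since at the latter point `u` is already at least `q u(r) ≥ 4 qⁿ⁺¹`. Hence
`s - r ≤ (1-r)²/(2qⁿ)`: the bad points of level `n` lie in one interval on which `1 - x` is
comparable to a constant, and that interval contributes at most `10/qⁿ` to the integral
(`exists_cover`). The geometric series of these bounds converges. The exceptional set is the union
of the covering intervals, so it is measurable.
-/

/-- A subset of `[0, 1)` whose points `r < s` all satisfy `s - r ≤ (1-r)²/(2k)`, with `k ≥ 1`, has a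
measurable cover of weight at most `10/k` for the density `(1-x)⁻²`: around any of its points `r` it
is confined to an interval of length `O((1-r)²/k)` on which `1 - x ≥ (1-r)/2`. -/
lemma exists_cover (r₀ k : ℝ) (hk : 1 ≤ k) (S : Set ℝ) (hS : S ⊆ Ico r₀ 1)
    (hS0 : ∀ r ∈ S, 0 ≤ r)
    (h : ∀ r ∈ S, ∀ s ∈ S, r < s → s - r ≤ (1 - r) ^ 2 / (2 * k)) :
    ∃ M : Set ℝ, MeasurableSet M ∧ M ⊆ Ico r₀ 1 ∧ S ⊆ M ∧
      (∫⁻ x in M, ENNReal.ofReal (((1 - x) ^ 2)⁻¹)) ≤ ENNReal.ofReal (10 * k⁻¹) := by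
  have hk0 : 0 < k := by linarith
  rcases S.eq_empty_or_nonempty with rfl | ⟨r, hr⟩
  · exact ⟨∅, MeasurableSet.empty, by simp, by simp, by simp⟩
  have half : ∀ t : ℝ, 0 ≤ t → t < 1 → (1 - t) ^ 2 / (2 * k) ≤ (1 - t) / 2 := by
    intro t h0 h1
    rw [div_le_div_iff₀ (by positivity) (by norm_num)]
    nlinarith [mul_nonneg (sub_nonneg.2 h1.le) (sub_nonneg.2 hk),
      mul_nonneg (sub_nonneg.2 h1.le) h0]
  have hr1 : r < 1 := (hS hr).2
  have hr0 := hS0 r hr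
  have hpos : 0 < 1 - r := by linarith
  -- A point `s < r` of `S` satisfies `1 - s ≤ 2 (1 - r)`, which costs a factor `4` on the left.
  refine ⟨Icc (r - 2 * (1 - r) ^ 2 / k) (r + (1 - r) ^ 2 / (2 * k)) ∩ Ico r₀ 1,
    measurableSet_Icc.inter measurableSet_Ico, inter_subset_right, ?_, ?_⟩
  · intro s hs
    refine ⟨?_, hS hs⟩
    have hs1 : s < 1 := (hS hs).2
    have hs0 := hS0 s hs
    have p1 : 0 ≤ 2 * (1 - r) ^ 2 / k := by positivity
    have p2 : 0 ≤ (1 - r) ^ 2 / (2 * k) := by positivity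
    rcases lt_trichotomy r s with hlt | rfl | hlt
    · have := h r hr s hs hlt
      exact ⟨by linarith, by linarith⟩
    · exact ⟨by linarith, by linarith⟩
    · have h1 := h s hs r hr hlt
      have h2 := half s hs0 hs1
      have h3 : (1 - s) ^ 2 ≤ 4 * (1 - r) ^ 2 := by nlinarith
      have h4 : (1 - s) ^ 2 / (2 * k) ≤ 2 * (1 - r) ^ 2 / k := by
        rw [div_le_div_iff₀ (by positivity) hk0]
        nlinarith
      exact ⟨by linarith, by linarith⟩
  · have hbound : ∀ x ∈ Icc (r - 2 * (1 - r) ^ 2 / k) (r + (1 - r) ^ 2 / (2 * k)) ∩ Ico r₀ 1,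
        ENNReal.ofReal (((1 - x) ^ 2)⁻¹) ≤ ENNReal.ofReal (4 * ((1 - r) ^ 2)⁻¹) := by
      rintro x ⟨⟨-, hx⟩, -⟩
      apply ENNReal.ofReal_le_ofReal
      have h2 := half r hr0 hr1
      have h3 : (1 - r) / 2 ≤ 1 - x := by linarith
      calc ((1 - x) ^ 2)⁻¹ ≤ (((1 - r) / 2) ^ 2)⁻¹ := by gcongr
        _ = 4 * ((1 - r) ^ 2)⁻¹ := by field_simp; norm_num
    calc _ ≤ ∫⁻ x in Icc (r - 2 * (1 - r) ^ 2 / k) (r + (1 - r) ^ 2 / (2 * k)) ∩ Ico r₀ 1,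
          ENNReal.ofReal (4 * ((1 - r) ^ 2)⁻¹) :=
          setLIntegral_mono' (measurableSet_Icc.inter measurableSet_Ico) hbound
      _ ≤ ENNReal.ofReal (4 * ((1 - r) ^ 2)⁻¹) *
          volume (Icc (r - 2 * (1 - r) ^ 2 / k) (r + (1 - r) ^ 2 / (2 * k))) := by
          rw [setLIntegral_const]
          gcongr
          exact inter_subset_left
      _ = ENNReal.ofReal (10 * k⁻¹) := by
          rw [Real.volume_Icc, ← ENNReal.ofReal_mul (by positivity)]
          congr 1
          field_simp
          ring

/-- **Theorem F** (Borel-type growth lemma in the unit disk): if `v` is continuous,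
nondecreasing on `[r₀, 1)` and `v(r) → ∞` as `r → 1⁻`, then for every `δ > 0` there is
an exceptional set `L ⊆ [r₀, 1)` with `∫_L (1-x)⁻² dx < ∞` such that
`v(r + 2(1-r)²/log v(r)) < v(r)^(1+δ)` for all `r` close enough to 1 with `r ∉ L`
(for such `r`, in particular, `v(r) > 1` and `r + 2(1-r)²/log v(r) < 1`). -/
theorem borel_growth_lemma_disk
    (r₀ : ℝ) (hr₀ : r₀ < 1) (v : ℝ → ℝ)
    (hcont : ContinuousOn v (Set.Ico r₀ 1))
    (hmono : MonotoneOn v (Set.Ico r₀ 1))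
    (hinf : Filter.Tendsto v (nhdsWithin 1 (Set.Iio 1)) Filter.atTop)
    (δ : ℝ) (hδ : 0 < δ) :
    ∃ r₁ : ℝ, r₀ ≤ r₁ ∧ r₁ < 1 ∧
      ∃ L : Set ℝ, MeasurableSet L ∧ L ⊆ Set.Ico r₀ 1 ∧
        (∫⁻ x in L, ENNReal.ofReal (((1 - x)^2)⁻¹)) < ⊤ ∧
        ∀ r : ℝ, r₁ ≤ r → r < 1 → r ∉ L →
          1 < v r ∧ r + 2*(1 - r)^2 / Real.log (v r) < 1 ∧
          v (r + 2*(1 - r)^2 / Real.log (v r)) < v r ^ (1 + δ) := by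
  have hq : 1 < 1 + δ := by linarith
  obtain ⟨r₁, h01, hr₁0, hr₁1, hbig⟩ : ∃ r₁ : ℝ, r₀ ≤ r₁ ∧ 0 ≤ r₁ ∧ r₁ < 1 ∧
      ∀ r, r₁ ≤ r → r < 1 → Real.exp 4 ≤ v r := by
    have := hinf.eventually_ge_atTop (Real.exp 4)
    obtain ⟨l, hl, hl'⟩ := (mem_nhdsLT_iff_exists_Ioo_subset).1 this
    have hl1 : l < 1 := hl
    refine ⟨max (max r₀ 0) ((l + 1) / 2), (le_max_left _ _).trans (le_max_left _ _),
      (le_max_right _ _).trans (le_max_left _ _),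
      max_lt (max_lt hr₀ one_pos) (by linarith), fun r hr hr1 => hl' ⟨?_, hr1⟩⟩
    have := (le_max_right _ _).trans hr
    linarith
  have hv1 : ∀ r, r₁ ≤ r → r < 1 → 1 < v r := fun r h h' =>
    (Real.one_lt_exp_iff.2 (by norm_num)).trans_le (hbig r h h')
  have hu : ∀ r, r₁ ≤ r → r < 1 → 4 ≤ Real.log (v r) := fun r h h' =>
    (Real.le_log_iff_exp_le (by linarith [hv1 r h h'])).2 (hbig r h h')
  have hlt1 : ∀ r, r₁ ≤ r → r < 1 → r + 2 * (1 - r) ^ 2 / Real.log (v r) < 1 := by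
    intro r h h'
    have h4 := hu r h h'
    have : 2 * (1 - r) ^ 2 / Real.log (v r) < 1 - r := by
      rw [div_lt_iff₀ (by linarith)]
      nlinarith [mul_pos (sub_pos.2 h') (sub_pos.2 h'),
        mul_nonneg (sub_nonneg.2 h'.le) (sub_nonneg.2 h4),
        mul_nonneg (sub_nonneg.2 h'.le) (hr₁0.trans h)]
    linarith
  let S : ℕ → Set ℝ := fun n => {r | r₁ ≤ r ∧ r < 1 ∧ (1 + δ) ^ n ≤ Real.log (v r) / 4 ∧
    Real.log (v r) / 4 < (1 + δ) ^ (n + 1) ∧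
    v r ^ (1 + δ) ≤ v (r + 2 * (1 - r) ^ 2 / Real.log (v r))}
  have hcover : ∀ n, ∃ M : Set ℝ, MeasurableSet M ∧ M ⊆ Ico r₀ 1 ∧ S n ⊆ M ∧
      (∫⁻ x in M, ENNReal.ofReal (((1 - x) ^ 2)⁻¹)) ≤
        ENNReal.ofReal (10 * ((1 + δ) ^ n)⁻¹) := by
    intro n
    have hqn : 0 < (1 + δ) ^ n := by positivity
    refine exists_cover r₀ _ (one_le_pow₀ hq.le) (S n) (fun r hr => ⟨h01.trans hr.1, hr.2.1⟩)
      (fun r hr => hr₁0.trans hr.1) ?_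
    rintro r ⟨hr, hr1, hlo, -, hbad⟩ s ⟨hs, hs1, -, hhi, -⟩ -
    have h4 := hu r hr hr1
    have hvr := hv1 r hr hr1
    have hsr : s < r + 2 * (1 - r) ^ 2 / Real.log (v r) := by
      by_contra! hle
      have hnn : 0 ≤ 2 * (1 - r) ^ 2 / Real.log (v r) := by positivity
      have hm := hmono ⟨by linarith, hlt1 r hr hr1⟩ ⟨h01.trans hs, hs1⟩ hle
      have hlog := Real.log_le_log (Real.rpow_pos_of_pos (by linarith) _) (hbad.trans hm)
      rw [Real.log_rpow (by linarith)] at hlog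
      rw [pow_succ] at hhi
      nlinarith
    have : 2 * (1 - r) ^ 2 / Real.log (v r) ≤ (1 - r) ^ 2 / (2 * (1 + δ) ^ n) := by
      rw [div_le_div_iff₀ (by linarith) (by positivity)]
      nlinarith [sq_nonneg (1 - r)]
    linarith
  choose M hMm hMs hSM hMi using hcover
  refine ⟨r₁, h01, hr₁1, ⋃ n, M n, MeasurableSet.iUnion hMm, iUnion_subset hMs, ?_, ?_⟩
  · have hsum : Summable fun n : ℕ => 10 * ((1 + δ) ^ n)⁻¹ := by
      simp_rw [← inv_pow]
      exact (summable_geometric_of_lt_one (by positivity) (inv_lt_one_of_one_lt₀ hq)).mul_left _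
    calc _ ≤ ∑' n, ∫⁻ x in M n, ENNReal.ofReal (((1 - x) ^ 2)⁻¹) := lintegral_iUnion_le _ _
      _ ≤ ∑' n : ℕ, ENNReal.ofReal (10 * ((1 + δ) ^ n)⁻¹) := ENNReal.tsum_le_tsum hMi
      _ < ⊤ := by
        rw [← ENNReal.ofReal_tsum_of_nonneg (fun n => by positivity) hsum]
        exact ENNReal.ofReal_lt_top
  · intro r hr hr1 hrL
    refine ⟨hv1 r hr hr1, hlt1 r hr hr1, ?_⟩
    by_contra! hbad
    obtain ⟨n, hn1, hn2⟩ := exists_nat_pow_near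
      (show 1 ≤ Real.log (v r) / 4 by linarith [hu r hr hr1]) hq
    exact hrL (mem_iUnion.2 ⟨n, hSM n ⟨hr, hr1, hn1, hn2, hbad⟩⟩)
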